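/- Let X be a locally compact Hausdorff space and let k be a symmetric positive definite kernel on X that is bounded and continuous on X × X, with RKHS H. Then k is cc-universal if and only if the embedding μ ↦ ∫_X k(·,x) dμ(x) from M_bc(X) into H is injective, i.e., ∫_X k(·,x) dμ(x) = 0 implies μ = 0 for every μ ∈ M_bc(X). -/

import Mathlib

open MeasureTheory Filter Topology RealInnerProductSpace

/-- Integral of a vector-valued function with respect to a finite signed measure,
defined via the Jordan decomposition. -/
noncomputable def svInt {X : Type*} [MeasurableSpace X] {E : Type*}
    [NormedAddCommGroup E] [NormedSpace ℝ E]
    (μ : MeasureTheory.SignedMeasure X) (f : X → E) : E :=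
  (∫ x, f x ∂μ.toJordanDecomposition.posPart) - ∫ x, f x ∂μ.toJordanDecomposition.negPart

/-!
On a compact set `Z`, Hahn–Banach says that the functions `ℓ ∘ Φ`, with `ℓ` in the dual of the
feature space, are dense in `C(Z)` unless some nonzero functional on `C(Z)` annihilates all of
them. By the Riesz representation theorem such a functional is integration against a difference
`p - n` of finite regular measures, and it annihilates every `ℓ ∘ Φ` exactly when `∫ Φ dp = ∫ Φ dn`.
Pushing `p` and `n` forward to `X` gives a signed measure carried by `Z` whose embedding vanishes;
conversely the Jordan components of a signed measure carried by `Z` restrict to regular measures on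
`Z`.
-/

open scoped NNReal CompactlySupported

section OrderBounded

open scoped Pointwise

variable {X : Type*} [TopologicalSpace X]

lemma nnreal_Iic_add_Iic (f₁ f₂ : C_c(X, ℝ≥0)) : Set.Iic f₁ + Set.Iic f₂ = Set.Iic (f₁ + f₂) := by
  refine (Set.Iic_add_Iic_subset f₁ f₂).antisymm fun g hg => ?_
  obtain ⟨h, hgh⟩ := CompactlySupportedContinuousMap.exists_add_of_le (inf_le_left : g ⊓ f₁ ≤ g)
  refine ⟨g ⊓ f₁, Set.mem_Iic.2 inf_le_right, h, Set.mem_Iic.2 fun x => ?_, hgh⟩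
  have hx : min (g x) (f₁ x) + h x = g x := DFunLike.congr_fun hgh x
  have hgx : g x ≤ f₁ x + f₂ x := hg x
  change h x ≤ f₂ x
  rcases le_total (g x) (f₁ x) with hle | hle
  · rw [min_eq_left hle, add_eq_left] at hx
    simp [hx]
  · rw [min_eq_right hle] at hx
    exact le_of_add_le_add_left (hx.trans_le hgx)

lemma nnreal_smul_Iic {c : ℝ≥0} (hc : c ≠ 0) (f : C_c(X, ℝ≥0)) :
    c • Set.Iic f = Set.Iic (c • f) := by
  ext g
  rw [Set.mem_smul_set_iff_inv_smul_mem₀ hc, Set.mem_Iic, Set.mem_Iic,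
    CompactlySupportedContinuousMap.le_def, CompactlySupportedContinuousMap.le_def]
  exact forall_congr' fun x => inv_mul_le_iff₀ (pos_of_ne_zero hc)

/-- A functional on the cone `C_c(X, ℝ≥0)` is order bounded if it is bounded above on each order
interval `[0, f]`. -/
def IsOrderBounded (L : C_c(X, ℝ≥0) →ₗ[ℝ≥0] ℝ) : Prop :=
  ∀ f, BddAbove (L '' Set.Iic f)

namespace IsOrderBounded

variable {L : C_c(X, ℝ≥0) →ₗ[ℝ≥0] ℝ}

lemma le_sSup_image_Iic (hL : IsOrderBounded L) {f g : C_c(X, ℝ≥0)} (hgf : g ≤ f) :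
    L g ≤ sSup (L '' Set.Iic f) :=
  le_csSup (hL f) (Set.mem_image_of_mem L hgf)

lemma sSup_image_Iic_add (hL : IsOrderBounded L) (f₁ f₂ : C_c(X, ℝ≥0)) :
    sSup (L '' Set.Iic (f₁ + f₂)) = sSup (L '' Set.Iic f₁) + sSup (L '' Set.Iic f₂) := by
  rw [← nnreal_Iic_add_Iic, Set.image_add]
  exact csSup_add (Set.nonempty_Iic.image L) (hL f₁) (Set.nonempty_Iic.image L) (hL f₂)

lemma sSup_image_Iic_smul (c : ℝ≥0) (f : C_c(X, ℝ≥0)) :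
    sSup (L '' Set.Iic (c • f)) = c • sSup (L '' Set.Iic f) := by
  rcases eq_or_ne c 0 with rfl | hc
  · have hIic : Set.Iic (0 : C_c(X, ℝ≥0)) = {0} :=
      Set.eq_singleton_iff_unique_mem.2
        ⟨Set.self_mem_Iic, fun g hg => le_antisymm hg fun x => zero_le⟩
    simp [hIic]
  · rw [← nnreal_smul_Iic hc, image_smul_set]
    exact Real.sSup_smul_of_nonneg c.2 _

/-- The positive part of an order bounded functional `L`, sending `f` to the supremum of `L` over
the order interval `[0, f]`. -/
noncomputable def posPart (hL : IsOrderBounded L) : C_c(X, ℝ≥0) →ₗ[ℝ≥0] ℝ≥0 where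
  toFun f := ⟨sSup (L '' Set.Iic f),
    (map_zero L).symm.trans_le (hL.le_sSup_image_Iic fun _ => zero_le)⟩
  map_add' f₁ f₂ := NNReal.eq (hL.sSup_image_Iic_add f₁ f₂)
  map_smul' c f := NNReal.eq (sSup_image_Iic_smul c f)

lemma le_posPart (hL : IsOrderBounded L) (f : C_c(X, ℝ≥0)) : L f ≤ hL.posPart f :=
  hL.le_sSup_image_Iic le_rfl

/-- The negative part `L⁺ - L` of an order bounded functional `L`. -/
noncomputable def negPart (hL : IsOrderBounded L) : C_c(X, ℝ≥0) →ₗ[ℝ≥0] ℝ≥0 where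
  toFun f := ⟨hL.posPart f - L f, sub_nonneg.2 (hL.le_posPart f)⟩
  map_add' f₁ f₂ := NNReal.eq <| by
    change ((hL.posPart (f₁ + f₂) : ℝ≥0) : ℝ) - L (f₁ + f₂) =
      (hL.posPart f₁ - L f₁) + (hL.posPart f₂ - L f₂)
    rw [map_add, map_add, NNReal.coe_add, add_sub_add_comm]
  map_smul' c f := NNReal.eq <| by
    change ((hL.posPart (c • f) : ℝ≥0) : ℝ) - L (c • f) = c * (hL.posPart f - L f)
    rw [map_smul, map_smul, NNReal.smul_def, smul_eq_mul, smul_eq_mul, NNReal.coe_mul, mul_sub]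

lemma posPart_sub_negPart (hL : IsOrderBounded L) (f : C_c(X, ℝ≥0)) :
    (hL.posPart f : ℝ) - hL.negPart f = L f :=
  sub_sub_cancel (hL.posPart f : ℝ) (L f)

end IsOrderBounded

end OrderBounded

section RieszRepresentation

open CompactlySupportedContinuousMap

variable {X : Type*} [TopologicalSpace X] [T2Space X] [MeasurableSpace X] [BorelSpace X]

theorem exists_regular_forall_eq_integral_sub_integral [LocallyCompactSpace X]
    (L : C_c(X, ℝ) →ₗ[ℝ] ℝ) (hL : IsOrderBounded (L.restrictScalars ℝ≥0 ∘ₗ toRealLinearMap)) :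
    ∃ p n : Measure X, p.Regular ∧ n.Regular ∧ ∀ f, L f = ∫ x, f x ∂p - ∫ x, f x ∂n := by
  refine ⟨NNRealRMK.rieszMeasure hL.posPart, NNRealRMK.rieszMeasure hL.negPart,
    inferInstance, inferInstance, fun f => ?_⟩
  have integral_eq (Λ : C_c(X, ℝ≥0) →ₗ[ℝ≥0] ℝ≥0) :
      ∫ x, f x ∂NNRealRMK.rieszMeasure Λ = Λ f.nnrealPart - Λ (-f).nnrealPart := by
    rw [← NNRealRMK.integral_rieszMeasure, ← NNRealRMK.integral_rieszMeasure]
    exact integral_eq_integral_pos_part_sub_integral_neg_part f.integrable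
  calc L f = L f.nnrealPart.toReal - L (-f).nnrealPart.toReal := by
        rw [← map_sub, nnrealPart_sub_nnrealPart_neg]
    _ = (hL.posPart f.nnrealPart - hL.negPart f.nnrealPart) -
          (hL.posPart (-f).nnrealPart - hL.negPart (-f).nnrealPart) := by
        rw [hL.posPart_sub_negPart, hL.posPart_sub_negPart]; rfl
    _ = _ := by rw [integral_eq, integral_eq, sub_sub_sub_comm]

theorem exists_regular_forall_dual_eq_integral_sub_integral [CompactSpace X]
    (φ : StrongDual ℝ C(X, ℝ)) :
    ∃ p n : Measure X, p.Regular ∧ n.Regular ∧ ∀ g, φ g = ∫ x, g x ∂p - ∫ x, g x ∂n := by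
  let L : C_c(X, ℝ) →ₗ[ℝ] ℝ :=
    { toFun := fun f => φ f.toContinuousMap
      map_add' := fun f g => φ.map_add f.toContinuousMap g.toContinuousMap
      map_smul' := fun c f => φ.map_smul c f.toContinuousMap }
  have hL : IsOrderBounded (L.restrictScalars ℝ≥0 ∘ₗ toRealLinearMap) := by
    refine fun f => ⟨‖φ‖ * ‖f.toReal.toContinuousMap‖, ?_⟩
    rintro _ ⟨g, hg, rfl⟩
    have norm_le : ‖g.toReal.toContinuousMap‖ ≤ ‖f.toReal.toContinuousMap‖ :=
      (ContinuousMap.norm_le _ (norm_nonneg _)).2 fun x =>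
        calc ‖g.toReal x‖ = g x := by simp
          _ ≤ f x := hg x
          _ = ‖f.toReal x‖ := by simp
          _ ≤ _ := f.toReal.toContinuousMap.norm_coe_le_norm x
    exact (le_abs_self _).trans (φ.le_opNorm_of_le norm_le)
  obtain ⟨p, n, hp, hn, hpn⟩ := exists_regular_forall_eq_integral_sub_integral L hL
  exact ⟨p, n, hp, hn, fun g => hpn ⟨g, HasCompactSupport.of_compactSpace g⟩⟩

end RieszRepresentation

section DenseRange

lemma denseRange_of_forall_dual_eq_zero {V E : Type*} [AddCommGroup V] [Module ℝ V]
    [AddCommGroup E] [Module ℝ E] [TopologicalSpace E] [IsTopologicalAddGroup E]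
    [ContinuousSMul ℝ E] [LocallyConvexSpace ℝ E] (R : V →ₗ[ℝ] E)
    (hR : ∀ φ : StrongDual ℝ E, (∀ v, φ (R v) = 0) → φ = 0) : DenseRange R := by
  intro x
  by_contra hx
  have hconvex : Convex ℝ (closure (Set.range R)) := (LinearMap.range R).convex.closure
  obtain ⟨φ, u, hφu, hux⟩ := geometric_hahn_banach_closed_point hconvex isClosed_closure hx
  have hlt (v : V) : φ (R v) < u := hφu _ (subset_closure ⟨v, rfl⟩)
  have hφR : φ.toLinearMap ∘ₗ R = 0 := by
    by_contra hne
    obtain ⟨v, hv⟩ := LinearMap.surjective hne u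
    exact (hlt v).ne hv
  have hφ : φ = 0 := hR φ (DFunLike.congr_fun hφR)
  have hu : 0 < u := by simpa using hlt 0
  simp only [hφ, zero_apply] at hux
  exact hux.not_gt hu

lemma denseRange_continuousMap_iff {ι Z M : Type*} [TopologicalSpace Z] [CompactSpace Z]
    [PseudoMetricSpace M] (F : ι → C(Z, M)) :
    DenseRange F ↔ ∀ (g : C(Z, M)) (ε : ℝ), 0 < ε → ∃ i, ∀ z, dist (F i z) (g z) ≤ ε := by
  simp only [DenseRange, Dense, mem_closure_iff_nhds_basis Metric.nhds_basis_closedBall,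
    Set.exists_range_iff,
    Metric.mem_closedBall]
  exact forall₃_congr fun g ε hε => exists_congr fun i => ContinuousMap.dist_le hε.le

lemma continuous_integral_continuousMap {Z E : Type*} [TopologicalSpace Z] [CompactSpace Z]
    [MeasurableSpace Z] [BorelSpace Z] [NormedAddCommGroup E] [NormedSpace ℝ E]
    [SecondCountableTopologyEither Z E] (p : Measure Z) [IsFiniteMeasure p] :
    Continuous fun g : C(Z, E) => ∫ z, g z ∂p := by
  have integral_toLp (g : C(Z, E)) : ∫ z, ContinuousMap.toLp 1 p ℝ g z ∂p = ∫ z, g z ∂p :=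
    integral_congr_ae (ContinuousMap.coeFn_toLp p g)
  simpa only [Function.comp_def, integral_toLp] using
    continuous_integral.comp (ContinuousMap.toLp (E := E) 1 p ℝ).continuous

theorem denseRange_iff_forall_measure_eq {Z V : Type*} [TopologicalSpace Z] [T2Space Z]
    [CompactSpace Z] [MeasurableSpace Z] [BorelSpace Z] [AddCommGroup V] [Module ℝ V]
    (R : V →ₗ[ℝ] C(Z, ℝ)) :
    DenseRange R ↔ ∀ p n : Measure Z, p.Regular → n.Regular →
      (∀ v, ∫ z, R v z ∂p = ∫ z, R v z ∂n) → p = n := by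
  constructor
  · intro hR p n _ _ hpn
    have heq : (fun g : C(Z, ℝ) => ∫ z, g z ∂p) = fun g => ∫ z, g z ∂n :=
      hR.equalizer (continuous_integral_continuousMap p) (continuous_integral_continuousMap n)
        (funext hpn)
    exact Measure.ext_of_integral_eq_on_compactlySupported fun f => congrFun heq f.toContinuousMap
  · refine fun hsep => denseRange_of_forall_dual_eq_zero R fun φ hφ => ?_
    obtain ⟨p, n, hp, hn, hpn⟩ := exists_regular_forall_dual_eq_integral_sub_integral φ
    have heq : p = n := hsep p n hp hn fun v => sub_eq_zero.1 ((hpn (R v)).symm.trans (hφ v))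
    ext g
    rw [hpn, heq, sub_self, zero_apply]

end DenseRange

section FeatureMap

variable {Z E : Type*} [TopologicalSpace Z] [NormedAddCommGroup E] [NormedSpace ℝ E]

/-- The continuous functions `z ↦ ℓ (Ψ z)` induced on `Z` by a feature map `Ψ`, as `ℓ` runs through
the dual of the feature space. If `E` is a Hilbert space and `Ψ z = k(·, z)`, these are the members
of the RKHS of `k`. -/
def featureFunction (Ψ : C(Z, E)) : StrongDual ℝ E →ₗ[ℝ] C(Z, ℝ) where
  toFun ℓ := (ℓ : C(E, ℝ)).comp Ψ
  map_add' _ _ := rfl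
  map_smul' _ _ := rfl

theorem denseRange_featureFunction_iff [CompactSpace Z] [T2Space Z] [MeasurableSpace Z]
    [BorelSpace Z] [CompleteSpace E] (Ψ : C(Z, E)) :
    DenseRange (featureFunction Ψ) ↔ ∀ p n : Measure Z, p.Regular → n.Regular →
      ∫ z, Ψ z ∂p = ∫ z, Ψ z ∂n → p = n := by
  rw [denseRange_iff_forall_measure_eq]
  refine forall₄_congr fun p n _ _ => imp_congr_left ?_
  have integral_feature (ν : Measure Z) [ν.Regular] (ℓ : StrongDual ℝ E) :
      ∫ z, featureFunction Ψ ℓ z ∂ν = ℓ (∫ z, Ψ z ∂ν) :=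
    ℓ.integral_comp_comm
      (Ψ.continuous.integrable_of_hasCompactSupport (HasCompactSupport.of_compactSpace Ψ))
  simp only [integral_feature]
  exact (SeparatingDual.eq_iff_forall_dual_eq (R := ℝ)).symm

end FeatureMap

section SignedMeasure

variable {X : Type*} [MeasurableSpace X]

lemma totalVariation_toSignedMeasure_sub_le (p n : Measure X) [IsFiniteMeasure p]
    [IsFiniteMeasure n] :
    (p.toSignedMeasure - n.toSignedMeasure).totalVariation ≤ p + n := by
  rw [SignedMeasure.totalVariation, Measure.toJordanDecomposition_toSignedMeasure_sub]
  exact add_le_add Measure.sub_le Measure.sub_le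

lemma measure_sub_add_eq_sub_add (p n : Measure X) [IsFiniteMeasure p] [IsFiniteMeasure n] :
    (p - n) + n = (n - p) + p := by
  rw [← Measure.toSignedMeasure_eq_toSignedMeasure_iff, Measure.toSignedMeasure_add,
    Measure.toSignedMeasure_add, add_comm (n - p).toSignedMeasure, ← sub_eq_sub_iff_add_eq_add]
  exact (Measure.sub_toSignedMeasure_eq_toSignedMeasure_sub (μ := p) (ν := n)).symm

lemma svInt_toSignedMeasure_sub {E : Type*} [NormedAddCommGroup E] [NormedSpace ℝ E]
    {p n : Measure X} [IsFiniteMeasure p] [IsFiniteMeasure n] {f : X → E}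
    (hp : Integrable f p) (hn : Integrable f n) :
    svInt (p.toSignedMeasure - n.toSignedMeasure) f = ∫ x, f x ∂p - ∫ x, f x ∂n := by
  rw [svInt, Measure.toJordanDecomposition_toSignedMeasure_sub,
    Measure.jordanDecompositionOfToSignedMeasureSub_posPart,
    Measure.jordanDecompositionOfToSignedMeasureSub_negPart, sub_eq_sub_iff_add_eq_add,
    add_comm (∫ x, f x ∂p),
    ← integral_add_measure (hp.mono_measure Measure.sub_le) hn,
    ← integral_add_measure (hn.mono_measure Measure.sub_le) hp, measure_sub_add_eq_sub_add]

end SignedMeasure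

section InnerRegular

variable {X : Type*} [TopologicalSpace X] [MeasurableSpace X]

lemma innerRegular_of_le [T2Space X] [OpensMeasurableSpace X] {μ ν : Measure X}
    [IsFiniteMeasure μ] [μ.InnerRegular] (hνμ : ν ≤ μ) : ν.InnerRegular := by
  refine ⟨fun A hA r hr => ?_⟩
  obtain ⟨K, hKA, hK, hlt⟩ :=
    hA.exists_isCompact_sdiff_lt (measure_ne_top μ A) (tsub_pos_of_lt hr).ne'
  refine ⟨K, hKA, hK, lt_of_add_lt_add_right (a := ν (A \ K)) ?_⟩
  calc r + ν (A \ K) < ν A := lt_tsub_iff_left.1 ((hνμ _).trans_lt hlt)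
    _ ≤ ν K + ν (A \ K) := by
      simpa only [Set.union_sdiff_cancel hKA] using measure_union_le K (A \ K)

lemma innerRegular_comap {Y : Type*} [TopologicalSpace Y] [MeasurableSpace Y] {μ : Measure X}
    [hμ : μ.InnerRegular] {f : Y → X} (hf : IsInducing f) (hfm : MeasurableEmbedding f) :
    (μ.comap f).InnerRegular where
  innerRegular := hμ.innerRegular.comap hfm (fun _ hA => hfm.measurableSet_image' hA)
    (fun _ hKf hK => hf.isCompact_preimage' hK hKf)

end InnerRegular

section CompactSubset

variable {X E : Type*} [TopologicalSpace X] [T2Space X] [MeasurableSpace X] [BorelSpace X]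
  [NormedAddCommGroup E] [NormedSpace ℝ E] {Z : Set X} {Φ : X → E}

lemma regular_comap_subtype_val (hZ : MeasurableSet Z) (p : Measure X) [IsFiniteMeasure p]
    [p.InnerRegular] : (p.comap ((↑) : Z → X)).Regular := by
  have hval := MeasurableEmbedding.subtype_coe hZ
  have := innerRegular_comap (μ := p) IsInducing.subtypeVal hval
  infer_instance

theorem signedMeasure_eq_zero_of_svInt_eq_zero (hZ : MeasurableSet Z)
    (hsep : ∀ p n : Measure Z, p.Regular → n.Regular →
      ∫ z : Z, Φ z ∂p = ∫ z : Z, Φ z ∂n → p = n)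
    {μ : SignedMeasure X} [μ.totalVariation.InnerRegular] (hμZ : μ.totalVariation Zᶜ = 0)
    (hμΦ : svInt μ Φ = 0) : μ = 0 := by
  let p := μ.toJordanDecomposition.posPart
  let n := μ.toJordanDecomposition.negPart
  have : IsFiniteMeasure μ.totalVariation := inferInstanceAs (IsFiniteMeasure (p + n))
  have hp : p ≤ μ.totalVariation := Measure.le_add_right le_rfl
  have hn : n ≤ μ.totalVariation := Measure.le_add_left le_rfl
  have restrict_eq {ν : Measure X} (hν : ν ≤ μ.totalVariation) : ν.restrict Z = ν :=
    Measure.restrict_eq_self_of_ae_mem (Measure.absolutelyContinuous_of_le hν hμZ)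
  have regular_comap {ν : Measure X} (hν : ν ≤ μ.totalVariation) :
      (ν.comap ((↑) : Z → X)).Regular :=
    have := innerRegular_of_le hν
    have := isFiniteMeasure_of_le _ hν
    regular_comap_subtype_val hZ ν
  have hcomap : p.comap ((↑) : Z → X) = n.comap (↑) := by
    refine hsep _ _ (regular_comap hp) (regular_comap hn) ?_
    rw [integral_subtype_comap hZ, integral_subtype_comap hZ,
      restrict_eq hp, restrict_eq hn]
    exact sub_eq_zero.1 hμΦ
  have hpn : p = n := by
    rw [← restrict_eq hp, ← restrict_eq hn, ← map_comap_subtype_coe hZ, hcomap,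
      map_comap_subtype_coe hZ]
  rw [← μ.toSignedMeasure_toJordanDecomposition, JordanDecomposition.toSignedMeasure, sub_eq_zero,
    Measure.toSignedMeasure_eq_toSignedMeasure_iff]
  exact hpn

theorem measure_eq_of_forall_signedMeasure_eq_zero (hZ : IsCompact Z) (hΦ : ContinuousOn Φ Z)
    (hinj : ∀ μ : SignedMeasure X, μ.totalVariation.InnerRegular → μ.totalVariation Zᶜ = 0 →
      svInt μ Φ = 0 → μ = 0)
    {p n : Measure Z} [p.Regular] [n.Regular]
    (hpn : ∫ z : Z, Φ z ∂p = ∫ z : Z, Φ z ∂n) : p = n := by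
  have := isCompact_iff_compactSpace.1 hZ
  have hval := MeasurableEmbedding.subtype_coe hZ.measurableSet
  let p' : Measure X := p.map (↑)
  let n' : Measure X := n.map (↑)
  have integrable (ν : Measure Z) [IsFiniteMeasure ν] : Integrable Φ (ν.map (↑)) :=
    hval.integrable_map_iff.2 (hΦ.domRestrict.integrable_of_hasCompactSupport
      (HasCompactSupport.of_compactSpace _))
  have hle := totalVariation_toSignedMeasure_sub_le p' n'
  have : p'.InnerRegular := Measure.InnerRegular.map_of_continuous continuous_subtype_val
  have : n'.InnerRegular := Measure.InnerRegular.map_of_continuous continuous_subtype_val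
  have hnull : (p' + n') Zᶜ = 0 := by simp [p', n', hval.map_apply]
  have hsvInt : svInt (p'.toSignedMeasure - n'.toSignedMeasure) Φ = 0 := by
    rw [svInt_toSignedMeasure_sub (integrable p) (integrable n), hval.integral_map,
      hval.integral_map, hpn, sub_self]
  have hp'n' : p' = n' := by
    rw [← Measure.toSignedMeasure_eq_toSignedMeasure_iff, ← sub_eq_zero]
    exact hinj _ (innerRegular_of_le hle) (Measure.absolutelyContinuous_of_le hle hnull) hsvInt
  rw [← hval.comap_map p, ← hval.comap_map n]
  exact congrArg _ hp'n'

theorem exists_dual_approx_iff_forall_signedMeasure_eq_zero [CompleteSpace E] (hZ : IsCompact Z)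
    (hΦ : ContinuousOn Φ Z) :
    (∀ (g : C(Z, ℝ)) (ε : ℝ), 0 < ε → ∃ ℓ : StrongDual ℝ E, ∀ z : Z, |ℓ (Φ z) - g z| ≤ ε) ↔
      ∀ μ : SignedMeasure X, μ.totalVariation.InnerRegular → μ.totalVariation Zᶜ = 0 →
        svInt μ Φ = 0 → μ = 0 := by
  have := isCompact_iff_compactSpace.1 hZ
  let Ψ : C(Z, E) := ⟨Z.domRestrict Φ, hΦ.domRestrict⟩
  refine ((denseRange_continuousMap_iff (featureFunction Ψ)).symm.trans
    (denseRange_featureFunction_iff Ψ)).trans ⟨?_, ?_⟩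
  · exact fun hsep _ _ => signedMeasure_eq_zero_of_svInt_eq_zero hZ.measurableSet hsep
  · exact fun hinj _ _ _ _ => measure_eq_of_forall_signedMeasure_eq_zero hZ hΦ hinj

end CompactSubset

lemma continuous_of_continuous_inner {X H : Type*} [TopologicalSpace X] [NormedAddCommGroup H]
    [InnerProductSpace ℝ H] {Φ : X → H} (hΦ : Continuous fun p : X × X => ⟪Φ p.1, Φ p.2⟫) :
    Continuous Φ := by
  refine continuous_iff_continuousAt.2 fun x => tendsto_iff_norm_sub_tendsto_zero.2 ?_
  have norm_sub_eq (y : X) :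
      ‖Φ y - Φ x‖ = √(⟪Φ y, Φ y⟫ - 2 * ⟪Φ y, Φ x⟫ + ⟪Φ x, Φ x⟫) := by
    rw [real_inner_self_eq_norm_sq, real_inner_self_eq_norm_sq, ← norm_sub_sq_real,
      Real.sqrt_sq (norm_nonneg _)]
  have hdiag : Continuous fun y => ⟪Φ y, Φ y⟫ := hΦ.comp (continuous_id.prodMk continuous_id)
  have hright : Continuous fun y => ⟪Φ y, Φ x⟫ :=
    hΦ.comp (continuous_id.prodMk continuous_const)
  have hnorm : Continuous fun y => ‖Φ y - Φ x‖ := by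
    simp only [norm_sub_eq]
    fun_prop
  simpa only [sub_self, norm_zero] using hnorm.tendsto x

theorem stmt1_general {X E : Type*} [TopologicalSpace X] [T2Space X] [MeasurableSpace X]
    [BorelSpace X] [NormedAddCommGroup E] [NormedSpace ℝ E] [CompleteSpace E] {Φ : X → E}
    (hΦ : Continuous Φ) :
    (∀ Z : Set X, IsCompact Z → ∀ (g : C(Z, ℝ)) (ε : ℝ), 0 < ε →
        ∃ ℓ : StrongDual ℝ E, ∀ x : Z, |ℓ (Φ x) - g x| ≤ ε) ↔
      ∀ μ : SignedMeasure X, μ.totalVariation.InnerRegular →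
        (∃ K : Set X, IsCompact K ∧ μ.totalVariation Kᶜ = 0) → svInt μ Φ = 0 → μ = 0 := by
  constructor
  · rintro happrox μ hμ ⟨K, hK, hμK⟩
    exact (exists_dual_approx_iff_forall_signedMeasure_eq_zero hK hΦ.continuousOn).1
      (happrox K hK) μ hμ hμK
  · refine fun hinj Z hZ =>
      (exists_dual_approx_iff_forall_signedMeasure_eq_zero hZ hΦ.continuousOn).2 ?_
    exact fun μ hμ hμZ => hinj μ hμ ⟨Z, hZ, hμZ⟩

/-- Let `X` be a locally compact Hausdorff space and `k` a bounded
continuous symmetric positive definite kernel on `X` with RKHS `H`.  Then `k` is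
cc-universal (its RKHS is dense in `C(X)` in the topology of compact convergence) iff the
embedding `μ ↦ ∫ k(·,x) dμ(x)` of the compactly supported finite signed Radon measures
into `H` is injective. -/
theorem stmt1
    {X : Type*} [TopologicalSpace X] [T2Space X] [LocallyCompactSpace X]
    [MeasurableSpace X] [BorelSpace X]
    (k : X → X → ℝ) (hkcont : Continuous fun p : X × X => k p.1 p.2)
    (hkbdd : ∃ C : ℝ, ∀ x y : X, |k x y| ≤ C)
    {H : Type*} [NormedAddCommGroup H] [InnerProductSpace ℝ H] [CompleteSpace H]
    (T : H →ₗ[ℝ] (X → ℝ)) (hT : Function.Injective T)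
    (Φ : X → H)
    (hk : ∀ x y : X, k x y = ⟪Φ x, Φ y⟫)
    (hrepro : ∀ (f : H) (x : X), T f x = ⟪f, Φ x⟫) :
    (∀ (Z : Set X), IsCompact Z → ∀ (g : C(Z, ℝ)) (ε : ℝ), 0 < ε →
        ∃ f : H, ∀ x : Z, |T f (x : X) - g x| ≤ ε) ↔
      ∀ μ : MeasureTheory.SignedMeasure X, μ.totalVariation.InnerRegular →
        (∃ K : Set X, IsCompact K ∧ μ.totalVariation Kᶜ = 0) →
        svInt μ Φ = 0 → μ = 0 := by
  have hΦ : Continuous Φ := continuous_of_continuous_inner (by simpa only [hk] using hkcont)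
  simpa only [hrepro, (InnerProductSpace.toDual ℝ H).surjective.exists,
    InnerProductSpace.toDual_apply_apply] using stmt1_general hΦ
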